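/- arXiv:1808.05435 — 2 statements merged into one kernel-verified Lean document; each statement's English description precedes it below -/
import Mathlib

section
/- Let A be a complex semisimple unital Banach algebra and let a, b ∈ Soc A. Then a = b if and only if σ(a + x) = σ(b + x) for every rank one element x ∈ A. -/
open Complex

noncomputable section

/-- The nonzero spectrum `σ'(x) = σ(x) \ {0}` of an element of a complex algebra. -/
def nzSpec {A : Type*} [Ring A] [Algebra ℂ A] (x : A) : Set ℂ :=
  spectrum ℂ x \ {0}

/-- The spectral rank of an element: `rank a = sup_{x ∈ A} #σ'(xa)`, valued in `ℕ∞`. -/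
noncomputable def srank {A : Type*} [Ring A] [Algebra ℂ A] (a : A) : ℕ∞ :=
  ⨆ x : A, (nzSpec (x * a)).encard

/-- The socle of `A`: the set of finite-rank elements. -/
def socle (A : Type*) [Ring A] [Algebra ℂ A] : Set A :=
  {a : A | srank a ≠ ⊤}

/-- `A` is (Jacobson) semisimple: its Jacobson radical is `{0}`. -/
def JacobsonSemisimple (A : Type*) [Ring A] : Prop :=
  TwoSidedIdeal.jacobson (⊥ : TwoSidedIdeal A) = ⊥

/-- `Soc A` is a minimal two-sided ideal: it is a nonzero two-sided ideal containing
no two-sided ideals other than `{0}` and itself. -/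
def SocleIsMinimalTwoSidedIdeal (A : Type*) [Ring A] [Algebra ℂ A] : Prop :=
  ∃ I : TwoSidedIdeal A, (I : Set A) = socle A ∧ I ≠ ⊥ ∧
    ∀ J : TwoSidedIdeal A, J ≤ I → J = ⊥ ∨ J = I

/-- `A` is a prime algebra: all nonzero two-sided ideals `I, J` satisfy `IJ ≠ {0}`. -/
def IsPrimeAlgebra (A : Type*) [Ring A] : Prop :=
  ∀ I J : TwoSidedIdeal A, I ≠ ⊥ → J ≠ ⊥ → ∃ x ∈ I, ∃ y ∈ J, x * y ≠ 0

/-- The left annihilator of the socle equals `{0}`. -/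
def LeftAnnSocleTrivial (A : Type*) [Ring A] [Algebra ℂ A] : Prop :=
  {x : A | ∀ y ∈ socle A, x * y = 0} = {0}

/-!
If `xAx ⊆ ℂx` and `x (k - a)⁻¹ x = αx`, then `k ∈ σ(a + t⁻¹x)` exactly when `t = α`. Hence the
spectra of the `a + tx` determine `x (k - a)⁻¹ x`, and letting `k → ∞` in
`k² x ((k - a)⁻¹ - (k - b)⁻¹) x = 0` gives `x (a - b) x = 0`. Applying this to all `xz` in place
of `x`, semisimplicity yields `(a - b) x = 0`.

Such `x` are plentiful: a nonzero left ideal generated by a finite-rank element contains nonzero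
idempotents, and one of minimal rank is a primitive idempotent `e` with `eAe = ℂe`. So if
`(a - b) d ≠ 0` with `d` of finite rank, some `e = g (a - b) d` is such an idempotent, while
`e = e² = g (a - b) (de) = 0`. Thus `a - b` annihilates the socle, and therefore vanishes.

Idempotents come from elements `p` with `p - p²` quasinilpotent, because `g² = g - (p - p²)` is
solved by a Catalan series and `(p - g) (1 - 2g)⁻¹` is then idempotent.
-/

open Filter Topology

section Ring

variable {R : Type*} [Ring R] {x : R}

lemma eq_zero_of_forall_isUnit_one_sub_mul (hss : JacobsonSemisimple R)
    (h : ∀ y, IsUnit (1 - y * x)) : x = 0 := by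
  have hx : x ∈ TwoSidedIdeal.jacobson (⊥ : TwoSidedIdeal R) := by
    refine TwoSidedIdeal.mem_jacobson_iff.2 fun y ↦ ?_
    obtain ⟨u, hu⟩ := h (-y)
    refine ⟨↑u⁻¹, (TwoSidedIdeal.mem_bot R).2 ?_⟩
    calc ↑u⁻¹ * y * x + ↑u⁻¹ - 1 = ↑u⁻¹ * (1 - -y * x) - 1 := by noncomm_ring
      _ = 0 := by rw [← hu, Units.inv_mul, sub_self]
  rw [hss] at hx
  exact (TwoSidedIdeal.mem_bot R).1 hx

lemma eq_zero_of_forall_isNilpotent_mul (hss : JacobsonSemisimple R)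
    (h : ∀ y, IsNilpotent (y * x)) : x = 0 :=
  eq_zero_of_forall_isUnit_one_sub_mul hss fun y ↦ (h y).isUnit_one_sub

lemma eq_zero_of_forall_mul_mul_eq_zero (hss : JacobsonSemisimple R)
    (h : ∀ y, x * y * x = 0) : x = 0 :=
  eq_zero_of_forall_isNilpotent_mul hss fun y ↦
    ⟨2, by rw [pow_two, mul_assoc, ← mul_assoc x, h, mul_zero]⟩

end Ring

section Algebra

variable {A : Type*} [Ring A] [Algebra ℂ A] {a b x y : A}

lemma isUnit_add_smul_one_sub {e : A} (he : IsIdempotentElem e) (hex : e * x = x)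
    (hxe : x * e = x) (hey : e * y = y) (hye : y * e = y) (hxy : x * y = e) (hyx : y * x = e)
    {k : ℂ} (hk : k ≠ 0) : IsUnit (x + k • (1 - e)) := by
  have hmul (u v : A) (hue : u * e = u) (hev : e * v = v) (huv : u * v = e) (s t : ℂ)
      (hst : s * t = 1) : (u + s • (1 - e)) * (v + t • (1 - e)) = 1 := by
    have hu : u * (1 - e) = 0 := by rw [mul_sub, mul_one, hue, sub_self]
    have hv : (1 - e) * v = 0 := by rw [sub_mul, one_mul, hev, sub_self]
    rw [add_mul, mul_add, mul_add, huv, mul_smul_comm, hu, smul_mul_assoc, hv,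
      smul_mul_smul_comm, he.one_sub.eq, hst]
    module
  exact ⟨⟨_, _, hmul x y hxe hey hxy k k⁻¹ (mul_inv_cancel₀ hk),
    hmul y x hye hex hyx k⁻¹ k (inv_mul_cancel₀ hk)⟩, rfl⟩

lemma nzSpec_mul_comm (x y : A) : nzSpec (x * y) = nzSpec (y * x) :=
  spectrum.nonzero_mul_comm x y

lemma mem_nzSpec_iff {k : ℂ} : k ∈ nzSpec x ↔ k ≠ 0 ∧ ¬ IsUnit (algebraMap ℂ A k - x) := by
  rw [nzSpec, Set.mem_sdiff, spectrum.mem_iff, Set.mem_singleton_iff, and_comm]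

lemma nzSpec_add (hxy : x * y = 0) (hyx : y * x = 0) :
    nzSpec (x + y) = nzSpec x ∪ nzSpec y := by
  ext k
  rcases eq_or_ne k 0 with rfl | hk
  · simp [nzSpec]
  have hprod (u v : A) (huv : u * v = 0) :
      (algebraMap ℂ A k - u) * (algebraMap ℂ A k - v) = k • (algebraMap ℂ A k - (u + v)) := by
    simp only [Algebra.algebraMap_eq_smul_one, sub_mul, mul_sub, huv, smul_sub, smul_add,
      smul_mul_assoc, mul_smul_comm, one_mul, mul_one]
    abel
  have hcomm : Commute (algebraMap ℂ A k - x) (algebraMap ℂ A k - y) := by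
    rw [commute_iff_eq, hprod x y hxy, hprod y x hyx, add_comm]
  have hunit : IsUnit (algebraMap ℂ A k - (x + y)) ↔
      IsUnit (algebraMap ℂ A k - x) ∧ IsUnit (algebraMap ℂ A k - y) := by
    rw [← hcomm.isUnit_mul_iff, hprod x y hxy, ← Units.smul_mk0 hk, isUnit_smul_iff]
  simp only [Set.mem_union, mem_nzSpec_iff, hunit]
  tauto

lemma nzSpec_subset_of_mul_self {α : ℂ} (h : x * x = α • x) : nzSpec x ⊆ {α} := by
  intro k hk
  obtain ⟨hk0, hk⟩ := mem_nzSpec_iff.1 hk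
  by_contra hne
  have hprod : (algebraMap ℂ A k - x) * (algebraMap ℂ A (k - α) + x) =
      algebraMap ℂ A (k * (k - α)) := by
    simp only [Algebra.algebraMap_eq_smul_one, sub_mul, mul_add, h, smul_mul_assoc,
      mul_smul_comm, one_mul, mul_one]
    module
  have hcomm : Commute (algebraMap ℂ A k - x) (algebraMap ℂ A (k - α) + x) :=
    (Algebra.commute_algebraMap_left k _).sub_left
      ((Algebra.commute_algebraMap_right (k - α) x).add_right (Commute.refl x))
  refine hk (hcomm.isUnit_mul_iff.1 ?_).1
  rw [hprod]
  exact (isUnit_iff_ne_zero.2 (mul_ne_zero hk0 (sub_ne_zero.2 hne))).map (algebraMap ℂ A)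

lemma nzSpec_eq_of_mul_self {α : ℂ} (hx : x ≠ 0) (h : x * x = α • x) : nzSpec x = {α} \ {0} := by
  refine Set.Subset.antisymm
    (Set.subset_sdiff.2 ⟨nzSpec_subset_of_mul_self h, Set.disjoint_sdiff_left⟩) ?_
  rintro _ ⟨rfl, hα⟩
  refine mem_nzSpec_iff.2 ⟨hα, fun hunit ↦ hx (hunit.mul_right_eq_zero.1 ?_)⟩
  rw [sub_mul, h, ← Algebra.smul_def, sub_self]

lemma nzSpec_smul_of_isIdempotentElem {g : A} (hg : IsIdempotentElem g) (hg0 : g ≠ 0) {μ : ℂ}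
    (hμ : μ ≠ 0) : nzSpec (μ • g) = {μ} := by
  rw [nzSpec_eq_of_mul_self (smul_ne_zero hμ hg0) (α := μ)
    (by rw [smul_mul_smul_comm, hg.eq, smul_smul])]
  exact sdiff_eq_left.2 (Set.disjoint_singleton.2 hμ)

lemma spectralRadius_eq_zero_of_nzSpec_eq_empty (hx : nzSpec x = ∅) :
    spectralRadius ℂ x = 0 := by
  refine le_antisymm (iSup₂_le fun k hk ↦ ?_) bot_le
  rw [Set.sdiff_eq_empty.1 hx hk, nnnorm_zero, ENNReal.coe_zero]

lemma exists_spectralRadius_sub_sq_eq_zero {q : A} (hfin : (nzSpec q).Finite)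
    (hne : (nzSpec q).Nonempty) :
    ∃ P : Polynomial ℂ, spectralRadius ℂ
        (Polynomial.aeval q (Polynomial.X * P) - Polynomial.aeval q (Polynomial.X * P) ^ 2) = 0 ∧
      ¬ IsUnit (1 - Polynomial.aeval q (Polynomial.X * P)) := by
  obtain ⟨P, hP⟩ : ∃ P : Polynomial ℂ, ∀ k ∈ nzSpec q, P.eval k = k⁻¹ :=
    ⟨Lagrange.interpolate hfin.toFinset id (·⁻¹), fun _ hk ↦
      Lagrange.eval_interpolate_at_node _ Function.injective_id.injOn (hfin.mem_toFinset.2 hk)⟩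
  have hval : ∀ k ∈ nzSpec q, (Polynomial.X * P).eval k = 1 := fun k hk ↦ by
    rw [Polynomial.eval_mul, Polynomial.eval_X, hP k hk, mul_inv_cancel₀ hk.2]
  have hσ : (spectrum ℂ q).Nonempty := hne.mono Set.sdiff_subset
  refine ⟨P, spectralRadius_eq_zero_of_nzSpec_eq_empty (Set.sdiff_eq_empty.2 ?_), fun hunit ↦ ?_⟩
  · rw [← map_pow, ← map_sub, spectrum.map_polynomial_aeval_of_nonempty _ _ hσ]
    rintro _ ⟨k, hk, rfl⟩
    rcases eq_or_ne k 0 with rfl | hk0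
    · simp
    · simp [hval k ⟨hk, hk0⟩]
  · obtain ⟨k, hk⟩ := hne
    have hone : (1 : ℂ) ∈ spectrum ℂ (Polynomial.aeval q (Polynomial.X * P)) :=
      hval k hk ▸ spectrum.subset_polynomial_aeval q _ ⟨k, hk.1, rfl⟩
    exact hone (spectrum.mem_resolventSet_iff.2 (by rwa [map_one]))

lemma encard_nzSpec_mul_le_srank (x y : A) : (nzSpec (y * x)).encard ≤ srank x :=
  le_iSup (fun z ↦ (nzSpec (z * x)).encard) y

lemma finite_nzSpec_mul (hx : x ∈ socle A) (y : A) : (nzSpec (y * x)).Finite :=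
  Set.encard_lt_top_iff.1 ((encard_nzSpec_mul_le_srank x y).trans_lt (lt_top_iff_ne_top.2 hx))

lemma srank_mul_le (y x : A) : srank (y * x) ≤ srank x :=
  iSup_le fun z ↦ by
    rw [← mul_assoc]
    exact encard_nzSpec_mul_le_srank x (z * y)

lemma mul_mem_socle (y : A) (hx : x ∈ socle A) : y * x ∈ socle A :=
  ne_top_of_le_ne_top hx (srank_mul_le y x)

lemma exists_nzSpec_mul_nonempty (hss : JacobsonSemisimple A) (hx : x ≠ 0) :
    ∃ y, (nzSpec (y * x)).Nonempty := by
  by_contra! h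
  refine hx (eq_zero_of_forall_isUnit_one_sub_mul hss fun y ↦ ?_)
  by_contra hy
  have h1 : (1 : ℂ) ∈ nzSpec (y * x) := mem_nzSpec_iff.2 ⟨one_ne_zero, by rwa [map_one]⟩
  rw [h y] at h1
  exact h1

lemma srank_lt_srank_add {f g : A} (hf : IsIdempotentElem f) (hg : IsIdempotentElem g)
    (hfg : f * g = 0) (hgf : g * f = 0) (hg0 : g ≠ 0) (hfin : f ∈ socle A) :
    srank f < srank (f + g) := by
  obtain ⟨y, hy⟩ := ENat.exists_eq_iSup_of_lt_top
    (f := fun z ↦ (nzSpec (z * f)).encard) (lt_top_iff_ne_top.2 hfin)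
  change _ = srank f at hy
  have hcorner : nzSpec (f * y * f) = nzSpec (y * f) := by
    rw [mul_assoc, nzSpec_mul_comm, mul_assoc, hf.eq]
  obtain ⟨μ, hμ⟩ := ((finite_nzSpec_mul hfin y).insert 0).exists_notMem
  obtain ⟨hμ0, hμy⟩ := not_or.1 hμ
  -- Adding a multiple of `g` to a maximiser of `#σ'(yf)` creates one more nonzero spectral value.
  have hspec : nzSpec ((f * y * f + μ • g) * (f + g)) = insert μ (nzSpec (y * f)) := by
    have hmul : (f * y * f + μ • g) * (f + g) = f * y * f + μ • g := by
      simp only [mul_add, add_mul, smul_mul_assoc, mul_assoc, hf.eq, hg.eq, hfg, hgf, mul_zero,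
        smul_zero, add_zero, zero_add]
    rw [hmul, nzSpec_add, hcorner, nzSpec_smul_of_isIdempotentElem hg hg0 hμ0,
      Set.union_singleton]
    · rw [mul_smul_comm, mul_assoc, hfg, mul_zero, smul_zero]
    · rw [smul_mul_assoc, mul_assoc f, ← mul_assoc g, hgf, zero_mul, smul_zero]
  calc srank f < srank f + 1 := ENat.lt_add_one_iff hfin |>.2 le_rfl
    _ = (nzSpec ((f * y * f + μ • g) * (f + g))).encard := by
      rw [hspec, Set.encard_insert_of_notMem hμy, hy]
    _ ≤ srank (f + g) := encard_nzSpec_mul_le_srank _ _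

/-- The condition `xAx ⊆ ℂx`, an algebraic form of rank at most one in semisimple algebras, under
which the spectrum of `a + tx` is governed by the scalar in `x (k - a)⁻¹ x = αx`. Zero is allowed
so that the condition is stable under multiplication and scaling. -/
def SpatialRankLEOne (x : A) : Prop :=
  ∀ w, ∃ α : ℂ, x * w * x = α • x

namespace SpatialRankLEOne

lemma mul_left (hx : SpatialRankLEOne x) (y : A) : SpatialRankLEOne (y * x) := fun w ↦ by
  obtain ⟨α, hα⟩ := hx (w * y)
  refine ⟨α, ?_⟩
  calc y * x * w * (y * x) = y * (x * (w * y) * x) := by noncomm_ring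
    _ = α • (y * x) := by rw [hα, mul_smul_comm]

lemma mul_right (hx : SpatialRankLEOne x) (y : A) : SpatialRankLEOne (x * y) := fun w ↦ by
  obtain ⟨α, hα⟩ := hx (y * w)
  refine ⟨α, ?_⟩
  calc x * y * w * (x * y) = x * (y * w) * x * y := by noncomm_ring
    _ = α • (x * y) := by rw [hα, smul_mul_assoc]

lemma smul (hx : SpatialRankLEOne x) (t : ℂ) : SpatialRankLEOne (t • x) :=
  Algebra.smul_def t x ▸ hx.mul_left _

lemma encard_nzSpec_le_one (hx : SpatialRankLEOne x) : (nzSpec x).encard ≤ 1 := by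
  obtain ⟨α, hα⟩ := hx 1
  rw [mul_one] at hα
  exact (Set.encard_le_encard (nzSpec_subset_of_mul_self hα)).trans (Set.encard_singleton α).le

lemma srank_eq_one (hss : JacobsonSemisimple A) (hx : SpatialRankLEOne x) (hx0 : x ≠ 0) :
    srank x = 1 := by
  refine le_antisymm (iSup_le fun y ↦ (hx.mul_left y).encard_nzSpec_le_one) ?_
  obtain ⟨y, hy⟩ := exists_nzSpec_mul_nonempty hss hx0
  exact (Set.one_le_encard_iff_nonempty.2 hy).trans (encard_nzSpec_mul_le_srank x y)

end SpatialRankLEOne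

lemma mem_spectrum_add_inv_smul_iff {k α t : ℂ} (hk : k ∈ resolventSet ℂ a) (hx : x ≠ 0)
    (hα : x * resolvent a k * x = α • x) (ht : t ≠ 0) :
    k ∈ spectrum ℂ (a + t⁻¹ • x) ↔ t = α := by
  have hR : IsUnit (algebraMap ℂ A k - a) := spectrum.mem_resolventSet_iff.1 hk
  have hfactor : algebraMap ℂ A k - (a + t⁻¹ • x) =
      t⁻¹ • ((algebraMap ℂ A k - a) * (algebraMap ℂ A t - resolvent a k * x)) := by
    rw [mul_sub, resolvent, ← mul_assoc, Ring.mul_inverse_cancel _ hR, one_mul,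
      ← Algebra.commutes, ← Algebra.smul_def, smul_sub, inv_smul_smul₀ ht, sub_sub]
  have hRx : resolvent a k * x ≠ 0 := fun h ↦ hx <| by
    rw [← one_mul x, ← Ring.mul_inverse_cancel _ hR, mul_assoc, ← resolvent, h, mul_zero]
  have hsq : resolvent a k * x * (resolvent a k * x) = α • (resolvent a k * x) := by
    rw [mul_assoc, ← mul_assoc x, hα, mul_smul_comm]
  calc k ∈ spectrum ℂ (a + t⁻¹ • x) ↔ t ∈ nzSpec (resolvent a k * x) := by
        rw [mem_nzSpec_iff, and_iff_right ht, spectrum.mem_iff, hfactor,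
          ← Units.smul_mk0 (inv_ne_zero ht), isUnit_smul_iff, ← hR.unit_spec,
          Units.isUnit_units_mul]
    _ ↔ t = α := by
        rw [nzSpec_eq_of_mul_self hRx hsq]
        exact and_iff_left ht

lemma SpatialRankLEOne.mul_resolvent_mul_eq (hx : SpatialRankLEOne x)
    (hspec : ∀ t : ℂ, t ≠ 0 → spectrum ℂ (a + t • x) = spectrum ℂ (b + t • x)) {k : ℂ}
    (hka : k ∈ resolventSet ℂ a) (hkb : k ∈ resolventSet ℂ b) :
    x * resolvent a k * x = x * resolvent b k * x := by
  rcases eq_or_ne x 0 with rfl | hx0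
  · simp only [mul_zero]
  obtain ⟨α, hα⟩ := hx (resolvent a k)
  obtain ⟨β, hβ⟩ := hx (resolvent b k)
  have hiff (t : ℂ) (ht : t ≠ 0) : t = α ↔ t = β := by
    rw [← mem_spectrum_add_inv_smul_iff hka hx0 hα ht, hspec _ (inv_ne_zero ht),
      mem_spectrum_add_inv_smul_iff hkb hx0 hβ ht]
  have hαβ : α = β := by
    rcases eq_or_ne α 0 with rfl | hα0
    · by_contra hβ0
      exact hβ0 ((hiff β (Ne.symm hβ0)).2 rfl).symm
    · exact (hiff α hα0).1 rfl
  rw [hα, hβ, hαβ]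

end Algebra

section Resolvent

lemma tendsto_smul_resolvent_cobounded {𝕜 A : Type*} [NontriviallyNormedField 𝕜] [NormedRing A]
    [NormedAlgebra 𝕜 A] [CompleteSpace A] (a : A) :
    Tendsto (fun k : 𝕜 ↦ k • resolvent a k) (Bornology.cobounded 𝕜) (𝓝 1) := by
  have hlim : Tendsto (fun k : 𝕜 ↦ 1 + a * resolvent a k) (Bornology.cobounded 𝕜) (𝓝 1) := by
    simpa only [mul_zero, add_zero] using
      (((spectrum.resolvent_tendsto_cobounded a).const_mul a).const_add 1)
  refine hlim.congr' ?_
  filter_upwards [spectrum.eventually_isUnit_resolvent a] with k hk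
  have hunit : IsUnit (algebraMap 𝕜 A k - a) :=
    spectrum.mem_resolventSet_iff.1 (spectrum.isUnit_resolvent.2 hk)
  rw [Algebra.smul_def, eq_comm, ← sub_eq_iff_eq_add, ← sub_mul, resolvent,
    Ring.mul_inverse_cancel _ hunit]

variable {A : Type*} [NormedRing A] [NormedAlgebra ℂ A] [CompleteSpace A] {a b x : A}

lemma SpatialRankLEOne.mul_sub_mul_eq_zero (hx : SpatialRankLEOne x)
    (hspec : ∀ t : ℂ, t ≠ 0 → spectrum ℂ (a + t • x) = spectrum ℂ (b + t • x)) :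
    x * (a - b) * x = 0 := by
  have hlim : Tendsto
      (fun k : ℂ ↦ x * (k • resolvent a k * (a - b) * (k • resolvent b k)) * x)
      (Bornology.cobounded ℂ) (𝓝 (x * (a - b) * x)) := by
    simpa only [one_mul, mul_one] using
      ((((tendsto_smul_resolvent_cobounded a).mul_const (a - b)).mul
        (tendsto_smul_resolvent_cobounded b)).const_mul x).mul_const x
  refine tendsto_nhds_unique hlim (tendsto_const_nhds.congr' ?_)
  filter_upwards [spectrum.eventually_isUnit_resolvent a,
    spectrum.eventually_isUnit_resolvent b] with k hka hkb
  rw [← spectrum.isUnit_resolvent] at hka hkb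
  calc (0 : A) = (k * k) • (x * resolvent a k * x - x * resolvent b k * x) := by
        rw [hx.mul_resolvent_mul_eq hspec hka hkb, sub_self, smul_zero]
    _ = (k * k) • (x * (resolvent a k * (a - b) * resolvent b k) * x) := by
        rw [← sub_mul, ← mul_sub, spectrum.resolvent_sub_resolvent hka hkb]
    _ = x * (k • resolvent a k * (a - b) * (k • resolvent b k)) * x := by
        simp only [smul_mul_assoc, mul_smul_comm, smul_smul]

lemma SpatialRankLEOne.sub_mul_eq_zero (hss : JacobsonSemisimple A) (hx : SpatialRankLEOne x)
    (h : ∀ x : A, srank x = 1 → spectrum ℂ (a + x) = spectrum ℂ (b + x)) :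
    (a - b) * x = 0 := by
  have hzero (z : A) (hz : SpatialRankLEOne z) : z * (a - b) * z = 0 := by
    rcases eq_or_ne z 0 with rfl | hz0
    · rw [mul_zero]
    · exact hz.mul_sub_mul_eq_zero fun t ht ↦
        h _ ((hz.smul t).srank_eq_one hss (smul_ne_zero ht hz0))
  have hpolar (z : A) : x * z * (a - b) * x = 0 := by
    have hxz := hzero _ (hx.mul_right (1 + z))
    have hz := hzero _ (hx.mul_right z)
    have hx1 := hzero x hx
    calc x * z * (a - b) * x
        = x * (1 + z) * (a - b) * (x * (1 + z)) - x * z * (a - b) * (x * z)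
          - x * (a - b) * x * (1 + z) := by noncomm_ring
      _ = 0 := by rw [hxz, hz, hx1, zero_mul, sub_zero, sub_zero]
  refine eq_zero_of_forall_mul_mul_eq_zero hss fun y ↦ ?_
  calc (a - b) * x * y * ((a - b) * x) = (a - b) * (x * y * (a - b) * x) := by noncomm_ring
    _ = 0 := by rw [hpolar, mul_zero]

end Resolvent

section SpectralRadius

variable {A : Type*} [NormedRing A] [NormedAlgebra ℂ A] [CompleteSpace A] {x : A}

lemma eventually_norm_pow_le_of_spectralRadius_lt {r : ℝ}
    (hx : spectralRadius ℂ x < ENNReal.ofReal r) :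
    ∀ᶠ n : ℕ in atTop, ‖x ^ n‖ ≤ r ^ n := by
  have hr : 0 < r := ENNReal.ofReal_pos.1 (bot_lt_of_lt hx)
  filter_upwards [(spectrum.pow_norm_pow_one_div_tendsto_nhds_spectralRadius x).eventually_lt_const
    hx, eventually_ne_atTop 0] with n hn hn0
  rw [one_div, ENNReal.ofReal_lt_ofReal_iff hr] at hn
  calc ‖x ^ n‖ = (‖x ^ n‖ ^ (n⁻¹ : ℝ)) ^ n := (Real.rpow_inv_natCast_pow (norm_nonneg _) hn0).symm
    _ ≤ r ^ n := by gcongr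

lemma eq_zero_of_mul_mul_self_eq {u : A} (hx : spectralRadius ℂ x = 0) (hu : u * (x * x) = x) :
    x = 0 := by
  have hpow (n : ℕ) : u ^ n * x ^ (n + 1) = x := by
    induction n with
    | zero => simp
    | succ n ih =>
      calc u ^ (n + 1) * x ^ (n + 1 + 1) = u ^ n * (u * (x * x)) * x ^ n := by
            rw [pow_succ, pow_succ', pow_succ']; noncomm_ring
        _ = x := by rw [hu, mul_assoc, ← pow_succ', ih]
  have hlim : Tendsto (fun n : ℕ ↦ ‖x‖ * (2 : ℝ)⁻¹ ^ n) atTop (𝓝 0) := by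
    simpa only [mul_zero] using (tendsto_pow_atTop_nhds_zero_of_lt_one (by norm_num)
      (by norm_num : (2 : ℝ)⁻¹ < 1)).const_mul ‖x‖
  have hr : 0 < (2 * (‖u‖ + 1))⁻¹ := by positivity
  have hbound : ∀ᶠ n : ℕ in atTop, ‖x‖ ≤ ‖x‖ * (2 : ℝ)⁻¹ ^ n := by
    filter_upwards [eventually_norm_pow_le_of_spectralRadius_lt
      (hx.trans_lt (ENNReal.ofReal_pos.2 hr)), eventually_gt_atTop 0] with n hn hn0
    calc ‖x‖ = ‖u ^ n * x ^ n * x‖ := by rw [mul_assoc, ← pow_succ, hpow]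
      _ ≤ ‖u‖ ^ n * ‖x ^ n‖ * ‖x‖ := by
        refine (norm_mul_le _ _).trans ?_
        gcongr
        refine (norm_mul_le _ _).trans ?_
        gcongr
        exact norm_pow_le' u hn0
      _ ≤ (‖u‖ + 1) ^ n * (2 * (‖u‖ + 1))⁻¹ ^ n * ‖x‖ := by
        gcongr
        exact le_add_of_nonneg_right zero_le_one
      _ = ‖x‖ * 2⁻¹ ^ n := by rw [← mul_pow]; field_simp
  exact norm_le_zero_iff.1 (ge_of_tendsto hlim hbound)

lemma spectralRadius_coe_subalgebra {S : Subalgebra ℂ A} [CompleteSpace S] (x : S) :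
    spectralRadius ℂ (x : A) = spectralRadius ℂ x :=
  tendsto_nhds_unique (spectrum.pow_norm_pow_one_div_tendsto_nhds_spectralRadius (x : A))
    (spectrum.pow_norm_pow_one_div_tendsto_nhds_spectralRadius x)

lemma catalan_le_four_pow (n : ℕ) : catalan n ≤ 4 ^ n := by
  rw [catalan_eq_centralBinom_div]
  exact (Nat.div_le_self _ _).trans (Nat.centralBinom_le_four_pow n)

lemma summable_norm_catalan_smul_pow (hx : spectralRadius ℂ x < 1 / 4) :
    Summable fun n ↦ ‖(catalan n : ℂ) • x ^ n‖ := by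
  obtain ⟨r, hr0, hxr, hr⟩ := ENNReal.lt_iff_exists_real_btwn.1 hx
  have hr4 : 4 * r < 1 := by
    have : ENNReal.ofReal r < ENNReal.ofReal (1 / 4) := by
      rwa [ENNReal.ofReal_div_of_pos (by norm_num), ENNReal.ofReal_one, ENNReal.ofReal_ofNat]
    linarith [(ENNReal.ofReal_lt_ofReal_iff (by norm_num)).1 this]
  refine .of_norm_bounded_eventually_nat
    (summable_geometric_of_lt_one (by positivity) hr4) ?_
  filter_upwards [eventually_norm_pow_le_of_spectralRadius_lt hxr] with n hn
  calc ‖‖(catalan n : ℂ) • x ^ n‖‖ = catalan n * ‖x ^ n‖ := by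
        rw [norm_norm, norm_smul, Complex.norm_natCast]
    _ ≤ 4 ^ n * r ^ n := by
        gcongr
        exact_mod_cast catalan_le_four_pow n
    _ = (4 * r) ^ n := (mul_pow 4 r n).symm

lemma exists_eq_one_add_mul_sq (hx : spectralRadius ℂ x < 1 / 4) : ∃ c : A, c = 1 + x * c ^ 2 := by
  have hnorm := summable_norm_catalan_smul_pow hx
  refine ⟨∑' n, (catalan n : ℂ) • x ^ n, ?_⟩
  rw [pow_two, tsum_mul_tsum_eq_tsum_sum_antidiagonal_of_summable_norm hnorm hnorm,
    hnorm.of_norm.tsum_eq_zero_add, ← Summable.tsum_mul_left]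
  · congr 1
    · simp only [catalan_zero, Nat.cast_one, pow_zero, one_smul]
    · refine tsum_congr fun n ↦ ?_
      rw [catalan_succ', Finset.mul_sum, Nat.cast_sum, Finset.sum_smul]
      refine Finset.sum_congr rfl fun ij hij ↦ ?_
      rw [smul_mul_smul_comm, mul_smul_comm, ← pow_add,
        Finset.HasAntidiagonal.mem_antidiagonal.1 hij, ← pow_succ', Nat.cast_mul]
  · exact (summable_norm_sum_mul_antidiagonal_of_summable_norm hnorm hnorm).of_norm

end SpectralRadius

section Idempotent

/-- With `g = (p - p²) c` the hypotheses say `g² = g - (p - p²)` and `v = (1 - 2 g)⁻¹`, and the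
idempotent is `(p - g) v`. -/
lemma isIdempotentElem_mul_of_eq_one_add_mul_sq {R : Type*} [CommRing R] {p c v : R}
    (hc : c = 1 + (p - p ^ 2) * c ^ 2) (hv : (1 - 2 * (p - p ^ 2) * c) * v = 1) :
    IsIdempotentElem (p * ((1 - (1 - p) * c) * v)) ∧
      1 - p * ((1 - (1 - p) * c) * v) = (1 - p) * ((1 - p * c) * v) := by
  refine ⟨?_, by linear_combination -hv⟩
  rw [IsIdempotentElem]
  linear_combination (p - (p - p ^ 2) * c) * v * hv + v ^ 2 * (p - p ^ 2) * hc

lemma exists_isIdempotentElem_mul_of_spectralRadius_lt {B : Type*} [NormedCommRing B]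
    [NormedAlgebra ℂ B] [CompleteSpace B] {p : B} (hp : spectralRadius ℂ (p - p ^ 2) < 1 / 4) :
    ∃ w w' : B, IsIdempotentElem (p * w) ∧ 1 - p * w = (1 - p) * w' := by
  obtain ⟨c, hc⟩ := exists_eq_one_add_mul_sq hp
  have hunit : IsUnit (1 - (4 : ℂ) • (p - p ^ 2)) := by
    refine spectrum.isUnit_one_sub_smul_of_lt_inv_radius (ENNReal.lt_inv_iff_lt_inv.2 ?_)
    simpa using hp
  have hsq : (1 - 2 * (p - p ^ 2) * c) ^ 2 = 1 - (4 : ℂ) • (p - p ^ 2) := by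
    rw [Algebra.smul_def, map_ofNat]
    linear_combination -4 * (p - p ^ 2) * hc
  rw [← hsq, isUnit_pow_iff two_ne_zero] at hunit
  obtain ⟨v, hv⟩ := hunit.exists_right_inv
  exact ⟨_, _, isIdempotentElem_mul_of_eq_one_add_mul_sq hc hv⟩

variable {A : Type*} [NormedRing A] [NormedAlgebra ℂ A] [CompleteSpace A] {q : A}

/-- A substitute for the Riesz projection onto the nonzero part of a finite spectrum. -/
lemma exists_isIdempotentElem_mul (hfin : (nzSpec q).Finite) (hne : (nzSpec q).Nonempty) :
    ∃ w, IsIdempotentElem (q * w) ∧ q * w ≠ 0 ∧ Commute q w := by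
  obtain ⟨P, hrad, hunit⟩ := exists_spectralRadius_sub_sq_eq_zero hfin hne
  let _ : NormedCommRing (Algebra.elemental ℂ q) :=
    { (inferInstance : NormedRing (Algebra.elemental ℂ q)) with mul_comm := mul_comm }
  set q' : Algebra.elemental ℂ q := ⟨q, Algebra.elemental.self_mem ℂ q⟩
  set p : Algebra.elemental ℂ q := Polynomial.aeval q' (Polynomial.X * P) with hp
  have hpq : (p : A) = Polynomial.aeval q (Polynomial.X * P) :=
    Polynomial.aeval_subalgebra_coe _ _ _
  have hp0 : spectralRadius ℂ (p - p ^ 2) = 0 := by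
    rw [← spectralRadius_coe_subalgebra]
    simpa [hpq] using hrad
  obtain ⟨w, w', hidem, hcompl⟩ := exists_isIdempotentElem_mul_of_spectralRadius_lt
    (p := p) (by rw [hp0]; norm_num)
  have hpw : p * w = q' * (Polynomial.aeval q' P * w) := by
    rw [hp, map_mul, Polynomial.aeval_X, mul_assoc]
  refine ⟨(Polynomial.aeval q' P * w : Algebra.elemental ℂ q), ?_, fun h0 ↦ hunit ?_,
    congrArg Subtype.val (mul_comm q' (Polynomial.aeval q' P * w))⟩
  · rw [hpw] at hidem
    exact congrArg Subtype.val hidem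
  · have hpw0 : p * w = 0 := hpw.trans (Subtype.ext h0)
    rw [← hpq]
    have : (1 - p) * w' = 1 := by rw [← hcompl, hpw0, sub_zero]
    exact (IsUnit.of_mul_eq_one w' this).map (Algebra.elemental ℂ q).val

end Idempotent

section Primitive

/-- A primitive idempotent: a nonzero idempotent `e` that is the only nonzero idempotent of the
corner ring `eRe`. Those of finite rank supply the elements with `xAx ⊆ ℂx`. Membership
`f ∈ eRe` is written as `e * f = f` and `f * e = f`. -/
structure IsPrimitiveIdempotent {R : Type*} [Ring R] (e : R) : Prop where
  isIdempotentElem : IsIdempotentElem e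
  ne_zero : e ≠ 0
  eq_of_mul_eq : ∀ f, IsIdempotentElem f → f ≠ 0 → e * f = f → f * e = f → f = e

variable {A : Type*} [NormedRing A] [NormedAlgebra ℂ A] [CompleteSpace A] {e z d : A}

lemma exists_isIdempotentElem_mul_of_mem_socle (hss : JacobsonSemisimple A) (hd : d ∈ socle A)
    (hd0 : d ≠ 0) : ∃ g, IsIdempotentElem (g * d) ∧ g * d ≠ 0 := by
  obtain ⟨y, hy⟩ := exists_nzSpec_mul_nonempty hss hd0
  obtain ⟨w, hidem, hne, hcomm⟩ := exists_isIdempotentElem_mul (finite_nzSpec_mul hd y) hy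
  rw [hcomm.eq, ← mul_assoc] at hidem hne
  exact ⟨w * y, hidem, hne⟩

lemma exists_isPrimitiveIdempotent_mul (hss : JacobsonSemisimple A) (hd : d ∈ socle A)
    (hd0 : d ≠ 0) : ∃ g, IsPrimitiveIdempotent (g * d) := by
  obtain ⟨g, ⟨hidem, hne⟩, hmin⟩ := WellFounded.has_min
    (InvImage.wf (fun g : A ↦ srank (g * d)) wellFounded_lt)
    {g | IsIdempotentElem (g * d) ∧ g * d ≠ 0}
    (exists_isIdempotentElem_mul_of_mem_socle hss hd hd0)
  refine ⟨g, hidem, hne, fun f hf hf0 hef hfe ↦ by_contra fun hfne ↦ ?_⟩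
  have hfd : f * g * d = f := by rw [mul_assoc, hfe]
  have hcompl : IsIdempotentElem (g * d - f) := by
    rw [IsIdempotentElem, mul_sub, sub_mul, sub_mul, hidem.eq, hef, hfe, hf.eq]
    abel
  refine hmin (f * g) ⟨hfd.symm ▸ hf, hfd.symm ▸ hf0⟩ ?_
  change srank (f * g * d) < srank (g * d)
  rw [hfd]
  calc srank f < srank (f + (g * d - f)) :=
        srank_lt_srank_add hf hcompl (by rw [mul_sub, hfe, hf.eq, sub_self])
          (by rw [sub_mul, hef, hf.eq, sub_self]) (sub_ne_zero.2 (Ne.symm hfne))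
          (hfd ▸ mul_mem_socle (f * g) hd)
    _ = srank (g * d) := by rw [add_sub_cancel]

namespace IsPrimitiveIdempotent

lemma exists_left_inverse (hss : JacobsonSemisimple A) (he : IsPrimitiveIdempotent e)
    (hfin : e ∈ socle A) (hz0 : z ≠ 0) (hez : e * z = z) (hze : z * e = z) :
    ∃ u, e * u = u ∧ u * e = u ∧ u * z = e := by
  have hee := he.isIdempotentElem.eq
  obtain ⟨y, hy⟩ := exists_nzSpec_mul_nonempty hss hz0
  have hnz : nzSpec (e * y * z) = nzSpec (y * z) := by
    rw [mul_assoc, nzSpec_mul_comm, mul_assoc, hze]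
  have hz : z ∈ socle A := hze ▸ mul_mem_socle z hfin
  obtain ⟨w, hidem, hne, hcomm⟩ :=
    exists_isIdempotentElem_mul (finite_nzSpec_mul hz (e * y)) (hnz ▸ hy)
  have hew : w * (e * y * z) = e := by
    rw [← hcomm.eq]
    refine he.eq_of_mul_eq _ hidem hne ?_ ?_
    · simp only [← mul_assoc, hee]
    · rw [hcomm.eq, mul_assoc w, mul_assoc (e * y), hze]
  refine ⟨e * (w * e * y) * e, ?_, ?_, ?_⟩
  · simp only [← mul_assoc, hee]
  · simp only [mul_assoc, hee]
  · calc e * (w * e * y) * e * z = e * (w * (e * y * (e * z))) := by noncomm_ring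
      _ = e := by rw [hez, hew, hee]

lemma exists_inverse (hss : JacobsonSemisimple A) (he : IsPrimitiveIdempotent e)
    (hfin : e ∈ socle A) (hz0 : z ≠ 0) (hez : e * z = z) (hze : z * e = z) :
    ∃ u, e * u = u ∧ u * e = u ∧ u * z = e ∧ z * u = e := by
  obtain ⟨u, heu, hue, huz⟩ := he.exists_left_inverse hss hfin hz0 hez hze
  have hu0 : u ≠ 0 := by
    rintro rfl
    exact he.ne_zero (by rw [← huz, zero_mul])
  obtain ⟨v, -, hve, hvu⟩ := he.exists_left_inverse hss hfin hu0 heu hue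
  have hvz : v = z := by rw [← hve, ← huz, ← mul_assoc, hvu, hez]
  exact ⟨u, heu, hue, huz, hvz ▸ hvu⟩

lemma eq_smul_of_mem_nzSpec (hss : JacobsonSemisimple A) (he : IsPrimitiveIdempotent e)
    (hfin : e ∈ socle A) (hez : e * z = z) (hze : z * e = z) {k : ℂ} (hk : k ∈ nzSpec z) :
    z = k • e := by
  have hee := he.isIdempotentElem.eq
  obtain ⟨hk0, hk⟩ := mem_nzSpec_iff.1 hk
  by_contra hne
  have hew : e * (k • e - z) = k • e - z := by rw [mul_sub, mul_smul_comm, hee, hez]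
  have hwe : (k • e - z) * e = k • e - z := by rw [sub_mul, smul_mul_assoc, hee, hze]
  obtain ⟨u, heu, hue, huw, hwu⟩ := he.exists_inverse hss hfin (sub_ne_zero.2 (Ne.symm hne)) hew hwe
  have hdecomp : algebraMap ℂ A k - z = (k • e - z) + k • (1 - e) := by
    rw [Algebra.algebraMap_eq_smul_one]
    module
  rw [hdecomp] at hk
  exact hk (isUnit_add_smul_one_sub he.isIdempotentElem hew hwe heu hue hwu huw hk0)

lemma spatialRankLEOne (hss : JacobsonSemisimple A) (he : IsPrimitiveIdempotent e)
    (hfin : e ∈ socle A) : SpatialRankLEOne e := fun w ↦ by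
  have hee := he.isIdempotentElem.eq
  rcases eq_or_ne (e * w * e) 0 with h0 | h0
  · exact ⟨0, by rw [h0, zero_smul]⟩
  have hez : e * (e * w * e) = e * w * e := by simp only [← mul_assoc, hee]
  have hze : e * w * e * e = e * w * e := by rw [mul_assoc, hee]
  obtain ⟨u, -, -, huz, -⟩ := he.exists_inverse hss hfin h0 hez hze
  have hnz : (nzSpec (e * w * e)).Nonempty := by
    rw [Set.nonempty_iff_ne_empty]
    intro hempty
    refine h0 (eq_zero_of_mul_mul_self_eq (u := u)
      (spectralRadius_eq_zero_of_nzSpec_eq_empty hempty) ?_)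
    rw [← mul_assoc u, huz, hez]
  obtain ⟨k, hk⟩ := hnz
  exact ⟨k, he.eq_smul_of_mem_nzSpec hss hfin hez hze hk⟩

end IsPrimitiveIdempotent

end Primitive

section Socle

variable {A : Type*} [NormedRing A] [NormedAlgebra ℂ A] [CompleteSpace A] {a b : A}

lemma sub_mul_eq_zero_of_mem_socle (hss : JacobsonSemisimple A)
    (h : ∀ x : A, srank x = 1 → spectrum ℂ (a + x) = spectrum ℂ (b + x)) {d : A}
    (hd : d ∈ socle A) : (a - b) * d = 0 := by
  by_contra hne
  have hcd : (a - b) * d ∈ socle A := mul_mem_socle _ hd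
  obtain ⟨g, he⟩ := exists_isPrimitiveIdempotent_mul hss hcd hne
  have hde : (a - b) * (d * (g * ((a - b) * d))) = 0 :=
    ((he.spatialRankLEOne hss (mul_mem_socle g hcd)).mul_left d).sub_mul_eq_zero hss h
  refine he.ne_zero ?_
  calc g * ((a - b) * d) = g * ((a - b) * d) * (g * ((a - b) * d)) := he.isIdempotentElem.eq.symm
    _ = g * ((a - b) * (d * (g * ((a - b) * d)))) := by noncomm_ring
    _ = 0 := by rw [hde, mul_zero]

lemma sub_mul_eq_zero_of_mem_closure_span_socle (hss : JacobsonSemisimple A)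
    (h : ∀ x : A, srank x = 1 → spectrum ℂ (a + x) = spectrum ℂ (b + x)) {d : A}
    (hd : d ∈ (Ideal.span (socle A)).closure) : (a - b) * d = 0 := by
  have hclosed : IsClosed {x : A | (a - b) * x = 0} :=
    isClosed_eq (continuous_const_mul (a - b)) continuous_const
  refine closure_minimal (fun x hx ↦ ?_) hclosed hd
  induction hx using Submodule.closure_induction with
  | zero => exact mul_zero _
  | add x y _ _ hx hy => exact (mul_add _ x y).trans (by rw [hx, hy, add_zero])
  | smul_mem r x hx => exact sub_mul_eq_zero_of_mem_socle hss h (mul_mem_socle r hx)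

theorem socle_eq_iff_spectrum_add_rank_one_general (hss : JacobsonSemisimple A) (a b : A)
    (hab : a - b ∈ (Ideal.span (socle A)).closure) :
    a = b ↔ ∀ x : A, srank x = 1 → spectrum ℂ (a + x) = spectrum ℂ (b + x) := by
  refine ⟨fun h _ _ ↦ h ▸ rfl, fun h ↦ ?_⟩
  have hann (y : A) : (a - b) * y * (a - b) = 0 := by
    rw [mul_assoc]
    exact sub_mul_eq_zero_of_mem_closure_span_socle hss h (Ideal.mul_mem_left _ y hab)
  exact sub_eq_zero.1 (eq_zero_of_forall_mul_mul_eq_zero hss hann)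

end Socle

theorem socle_eq_iff_spectrum_add_rank_one
    {A : Type*} [NormedRing A] [NormOneClass A] [NormedAlgebra ℂ A] [CompleteSpace A]
    (hss : JacobsonSemisimple A) (a b : A) (ha : a ∈ socle A) (hb : b ∈ socle A) :
    a = b ↔ ∀ x : A, srank x = 1 → spectrum ℂ (a + x) = spectrum ℂ (b + x) :=
  socle_eq_iff_spectrum_add_rank_one_general hss a b
    (subset_closure (sub_mem (Ideal.subset_span ha) (Ideal.subset_span hb)))
end
end

section
/- Let A be a C*-algebra (complex, unital). Then A is prime if and only if for all a, b ∈ A the following are equivalent: (i) ρ(ax) ≤ ρ(bx) for all x ∈ A; (ii) a = λb for some λ ∈ ℂ with |λ| ≤ 1. -/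
/-!
If `ρ(ax) ≤ ρ(bx)` for all `x`, then testing on `x = y (uay)* u` and using `ρ(w* w) = ‖w‖²` gives
`‖uay‖ ≤ ‖uby‖` for all `u, y`. Hence the entire function `t ↦ exp(t bz) a exp(-t zb)` is bounded
by `‖b‖`, so it is constant, and its derivative at `0` says that `azb = bza`.

In a prime C⋆-algebra this forces `a ∈ ℂb` when `b ≠ 0`. Passing to `b*a` and `b*b`, and then to
real and imaginary parts, one may take `a` and `b` self-adjoint. Then `c = a + ib` satisfies
`czc* = c*zc` for all `z`. Cutting down on the two sides by bump functions `f(c)`, `g(c)` around two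
spectral values `s`, `t` of `c` gives `s t̄ = s̄ t`, because `f(c) z g(c) ≠ 0` for some `z`. So the
spectrum of `c` lies on a real line through `0`, which means that `a` and `b` are real multiples of
one self-adjoint element.

Conversely, if `xAy = 0` with `x, y ≠ 0`, then `yAx = 0` as well, and the orthogonality of `xw` and
`yw` gives `ρ(xw) ≤ ρ((x + y)w)` for all `w`, although `x ∉ ℂ(x + y)`.
-/

open Complex

noncomputable section

section TwoSidedIdeal

variable {A : Type*} [Ring A]

lemma mul_mul_eq_zero_of_mem_span {s t : Set A} (h : ∀ x ∈ s, ∀ y ∈ t, ∀ z, x * z * y = 0)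
    {u v : A} (hu : u ∈ TwoSidedIdeal.span s) (hv : v ∈ TwoSidedIdeal.span t) (z : A) :
    u * z * v = 0 := by
  have left : ∀ y ∈ t, ∀ z, u * z * y = 0 := by
    intro y hy
    induction hu using TwoSidedIdeal.span_induction with
    | mem x hx => exact h x hx y hy
    | zero => simp
    | add x x' _ _ hx hx' => simp [add_mul, hx, hx']
    | neg x _ hx => simp [hx]
    | left_absorb w x _ hx => simp [mul_assoc w, hx]
    | right_absorb w x _ hx => exact fun z ↦ by rw [mul_assoc x, hx]
  induction hv using TwoSidedIdeal.span_induction generalizing z with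
  | mem y hy => exact left y hy z
  | zero => simp
  | add y y' _ _ hy hy' => simp [mul_add, hy, hy']
  | neg y _ hy => simp [hy]
  | left_absorb w y _ hy => rw [← mul_assoc, mul_assoc u, hy]
  | right_absorb w y _ hy => rw [← mul_assoc, hy, zero_mul]

lemma exists_mem_ne_zero_of_twoSidedIdeal_ne_bot {I : TwoSidedIdeal A} (hI : I ≠ ⊥) :
    ∃ x ∈ I, x ≠ 0 := by
  contrapose! hI
  exact le_bot_iff.1 fun x hx ↦ (TwoSidedIdeal.mem_bot A).2 (hI x hx)

theorem isPrimeAlgebra_iff :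
    IsPrimeAlgebra A ↔ ∀ x y : A, (∀ z, x * z * y = 0) → x = 0 ∨ y = 0 := by
  constructor
  · intro hA x y hxy
    by_contra! hne
    have span_ne_bot {w : A} (hw : w ≠ 0) : TwoSidedIdeal.span {w} ≠ ⊥ := fun h ↦
      hw ((TwoSidedIdeal.mem_bot A).1 (h ▸ TwoSidedIdeal.subset_span rfl))
    obtain ⟨u, hu, v, hv, huv⟩ := hA _ _ (span_ne_bot hne.1) (span_ne_bot hne.2)
    exact huv (by simpa using mul_mul_eq_zero_of_mem_span (by simpa using hxy) hu hv 1)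
  · intro h I J hI hJ
    obtain ⟨x, hx, hx0⟩ := exists_mem_ne_zero_of_twoSidedIdeal_ne_bot hI
    obtain ⟨y, hy, hy0⟩ := exists_mem_ne_zero_of_twoSidedIdeal_ne_bot hJ
    by_contra! hIJ
    exact (h x y fun z ↦ hIJ _ (I.mul_mem_right x z hx) y hy).elim hx0 hy0

end TwoSidedIdeal

section SpectralRadius

variable {𝕜 A : Type*} [NormedField 𝕜] [Ring A] [Algebra 𝕜 A]

lemma spectralRadius_le_of_diff_zero_subset {a b : A}
    (h : spectrum 𝕜 a \ {0} ⊆ spectrum 𝕜 b) : spectralRadius 𝕜 a ≤ spectralRadius 𝕜 b := by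
  refine iSup₂_le fun k hk ↦ ?_
  rcases eq_or_ne k 0 with rfl | hk0
  · simp
  · exact le_iSup₂_of_le k (h ⟨hk, hk0⟩) le_rfl

theorem spectralRadius_mul_comm (a b : A) :
    spectralRadius 𝕜 (a * b) = spectralRadius 𝕜 (b * a) := by
  have le (a b : A) : spectralRadius 𝕜 (a * b) ≤ spectralRadius 𝕜 (b * a) :=
    spectralRadius_le_of_diff_zero_subset <|
      (spectrum.nonzero_mul_comm (𝕜 := 𝕜) a b).trans_subset Set.sdiff_subset
  exact (le a b).antisymm (le b a)

theorem spectralRadius_smul_le (r : 𝕜) (a : A) :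
    spectralRadius 𝕜 (r • a) ≤ ‖r‖₊ * spectralRadius 𝕜 a := by
  rcases eq_or_ne r 0 with rfl | hr
  · simp
  · refine iSup₂_le fun k hk ↦ ?_
    obtain ⟨m, hm, rfl⟩ := (spectrum.unit_smul_eq_smul a (Units.mk0 r hr)).subset hk
    calc (‖r * m‖₊ : ENNReal) = ‖r‖₊ * ‖m‖₊ := by rw [nnnorm_mul, ENNReal.coe_mul]
      _ ≤ ‖r‖₊ * spectralRadius 𝕜 a := by
        gcongr
        exact le_iSup₂ (f := fun k (_ : k ∈ spectrum 𝕜 a) ↦ (‖k‖₊ : ENNReal)) m hm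

theorem spectrum_diff_zero_subset_spectrum_add {a b : A} (hab : a * b = 0) (hba : b * a = 0) :
    spectrum 𝕜 a \ {0} ⊆ spectrum 𝕜 (a + b) := by
  rintro k ⟨hka, hk0⟩
  contrapose! hka
  rw [spectrum.notMem_iff] at hka ⊢
  have factor {x y : A} (hxy : x * y = 0) :
      (algebraMap 𝕜 A k - x) * (algebraMap 𝕜 A k - y) =
        algebraMap 𝕜 A k * (algebraMap 𝕜 A k - (x + y)) := by
    simp only [sub_mul, mul_sub, mul_add, hxy, ← Algebra.commutes k x]
    abel
  have hcomm : Commute (algebraMap 𝕜 A k - a) (algebraMap 𝕜 A k - b) := by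
    rw [Commute, SemiconjBy, factor hab, factor hba, add_comm]
  have hunit : IsUnit ((algebraMap 𝕜 A k - a) * (algebraMap 𝕜 A k - b)) :=
    factor hab ▸ ((IsUnit.mk0 k hk0).map _).mul hka
  exact (hcomm.isUnit_mul_iff.1 hunit).1

theorem spectralRadius_mul_le_spectralRadius_add_mul {x y : A} (hxy : ∀ z, x * z * y = 0)
    (hyx : ∀ z, y * z * x = 0) (w : A) :
    spectralRadius 𝕜 (x * w) ≤ spectralRadius 𝕜 ((x + y) * w) := by
  rw [add_mul]
  exact spectralRadius_le_of_diff_zero_subset <| spectrum_diff_zero_subset_spectrum_add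
    (by rw [← mul_assoc, hxy, zero_mul]) (by rw [← mul_assoc, hyx, zero_mul])

end SpectralRadius

section BanachAlgebra

variable {A : Type*} [NormedRing A] [NormedAlgebra ℂ A]

theorem mul_mul_comm_of_norm_mul_mul_le [CompleteSpace A] {a b : A}
    (h : ∀ x y : A, ‖x * a * y‖ ≤ ‖x * b * y‖) (z : A) : a * z * b = b * z * a := by
  let _ : NormedAlgebra ℚ A := .restrictScalars ℚ ℂ A
  let F (t : ℂ) : A := NormedSpace.exp (t • (b * z)) * a * NormedSpace.exp (t • -(z * b))
  have hderiv (t : ℂ) : HasDerivAt F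
      (NormedSpace.exp (t • (b * z)) * (b * z) * a * NormedSpace.exp (t • -(z * b)) +
        NormedSpace.exp (t • (b * z)) * a * (NormedSpace.exp (t • -(z * b)) * -(z * b))) t :=
    ((hasDerivAt_exp_smul_const (b * z) t).mul_const a).mul
      (hasDerivAt_exp_smul_const (-(z * b)) t)
  have hbound (t : ℂ) : ‖F t‖ ≤ ‖b‖ := by
    have intertwine : NormedSpace.exp (t • (b * z)) * b = b * NormedSpace.exp (t • (z * b)) :=
      (SemiconjBy.exp_right (by simp [SemiconjBy, mul_assoc])).eq.symm
    have inverse : NormedSpace.exp (t • (z * b)) * NormedSpace.exp (t • -(z * b)) = 1 := by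
      rw [smul_neg, ← NormedSpace.exp_add_of_commute (Commute.refl _).neg_right, add_neg_cancel,
        NormedSpace.exp_zero]
    calc ‖F t‖ ≤ ‖NormedSpace.exp (t • (b * z)) * b * NormedSpace.exp (t • -(z * b))‖ := h _ _
      _ = ‖b‖ := by rw [intertwine, mul_assoc, inverse, mul_one]
  have hconst : F = fun _ ↦ F 0 := by
    have hF : Differentiable ℂ F := fun t ↦ (hderiv t).differentiableAt
    have hrange : Bornology.IsBounded (Set.range F) :=
      isBounded_iff_forall_norm_le.2 ⟨‖b‖, Set.forall_mem_range.2 hbound⟩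
    exact funext fun t ↦ hF.apply_eq_apply_of_bounded hrange t 0
  have hderiv_zero : HasDerivAt F 0 0 := by
    rw [hconst]
    exact hasDerivAt_const 0 (F 0)
  have hsum : b * z * a + a * -(z * b) = 0 := by simpa using (hderiv 0).unique hderiv_zero
  rw [mul_neg, ← sub_eq_add_neg, sub_eq_zero] at hsum
  rw [hsum, mul_assoc]

lemma norm_mul_mul_sub_smul_le {p q : A} {s t : ℂ} {ε : ℝ} (hp : ‖p - algebraMap ℂ A s‖ ≤ ε)
    (hq : ‖q - algebraMap ℂ A t‖ ≤ ε) (w : A) :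
    ‖p * w * q - (s * t) • w‖ ≤ ε * (‖s‖ + ‖t‖ + ε) * ‖w‖ := by
  set p' := p - algebraMap ℂ A s with hp'
  set q' := q - algebraMap ℂ A t with hq'
  have hε : 0 ≤ ε := (norm_nonneg _).trans hp
  have expand : p * w * q - (s * t) • w = p' * w * q' + s • (w * q') + t • (p' * w) := by
    rw [← sub_add_cancel p (algebraMap ℂ A s), ← sub_add_cancel q (algebraMap ℂ A t), ← hp', ← hq']
    simp only [Algebra.algebraMap_eq_smul_one, add_mul, mul_add, smul_mul_assoc, mul_smul_comm,
      one_mul, mul_one]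
    module
  calc ‖p * w * q - (s * t) • w‖
      ≤ ‖p'‖ * ‖w‖ * ‖q'‖ + ‖s‖ * (‖w‖ * ‖q'‖) + ‖t‖ * (‖p'‖ * ‖w‖) := by
        rw [expand]
        refine (norm_add₃_le ..).trans ?_
        rw [norm_smul, norm_smul]
        gcongr
        exacts [norm_mul₃_le, norm_mul_le .., norm_mul_le ..]
    _ ≤ ε * ‖w‖ * ε + ‖s‖ * (‖w‖ * ε) + ‖t‖ * (ε * ‖w‖) := by gcongr
    _ = ε * (‖s‖ + ‖t‖ + ε) * ‖w‖ := by ring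

end BanachAlgebra

section CStarRing

variable {A : Type*} [NonUnitalNormedRing A] [StarRing A] [CStarRing A]

lemma eq_zero_of_forall_mul_mul_self_eq_zero {x : A} (h : ∀ z, x * z * x = 0) : x = 0 := by
  have hsq : star (star x * x) * (star x * x) = 0 := by
    rw [star_mul, star_star, mul_assoc, ← mul_assoc x, h, mul_zero]
  rwa [CStarRing.star_mul_self_eq_zero_iff, CStarRing.star_mul_self_eq_zero_iff] at hsq

theorem mul_mul_eq_zero_symm {x y : A} (h : ∀ z, x * z * y = 0) (z : A) : y * z * x = 0 :=
  eq_zero_of_forall_mul_mul_self_eq_zero fun w ↦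
    calc y * z * x * w * (y * z * x) = y * z * (x * w * y) * z * x := by simp only [mul_assoc]
      _ = 0 := by rw [h, mul_zero, zero_mul, zero_mul]

end CStarRing

lemma exists_continuous_bump_retraction {E : Type*} [NormedAddCommGroup E] [NormedSpace ℝ E]
    (s : E) {ε : ℝ} (hε : 0 < ε) :
    ∃ (bump : E → ℝ) (r : E → E), Continuous bump ∧ Continuous r ∧ bump s ≠ 0 ∧
      (∀ z, bump z ≠ 0 → r z = z) ∧ ∀ z, ‖r z - s‖ ≤ ε := by
  have hmax (z : E) : 0 < max ε ‖z - s‖ := hε.trans_le (le_max_left _ _)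
  refine ⟨fun z ↦ max (ε - ‖z - s‖) 0, fun z ↦ s + (ε / max ε ‖z - s‖) • (z - s), by fun_prop,
    ?_, by simp [hε.not_ge], fun z hz ↦ ?_, fun z ↦ ?_⟩
  · have hdiv : Continuous fun z : E ↦ ε / max ε ‖z - s‖ :=
      continuous_const.div (by fun_prop) fun z ↦ (hmax z).ne'
    fun_prop
  · have hlt : ‖z - s‖ < ε := by
      contrapose! hz
      exact max_eq_right (sub_nonpos.2 hz)
    simp [max_eq_left hlt.le, hε.ne']
  · rw [add_sub_cancel_left, norm_smul, norm_div, Real.norm_of_nonneg hε.le,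
      Real.norm_of_nonneg (hmax z).le, div_mul_eq_mul_div, div_le_iff₀ (hmax z)]
    gcongr
    exact le_max_right _ _

section CStarAlgebra

variable {A : Type*} [CStarAlgebra A]

theorem norm_mul_mul_le_of_spectralRadius_mul_le {a b : A}
    (h : ∀ x, spectralRadius ℂ (a * x) ≤ spectralRadius ℂ (b * x)) (x y : A) :
    ‖x * a * y‖ ≤ ‖x * b * y‖ := by
  nontriviality A
  set w := x * a * y with hw
  have rotate (d : A) :
      spectralRadius ℂ (d * (y * star w * x)) = spectralRadius ℂ (star w * (x * d * y)) := by
    rw [show d * (y * star w * x) = d * y * (star w * x) by noncomm_ring, spectralRadius_mul_comm]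
    congr 1
    noncomm_ring
  have hsq : ‖w‖ * ‖w‖ ≤ ‖w‖ * ‖x * b * y‖ := by
    have hρ : (‖star w * w‖₊ : ENNReal) ≤ ‖star w * (x * b * y)‖₊ := by
      rw [← (IsSelfAdjoint.star_mul_self w).spectralRadius_eq_nnnorm, hw, ← rotate a]
      exact (h _).trans ((rotate b).trans_le (spectrum.spectralRadius_le_nnnorm _))
    calc ‖w‖ * ‖w‖ = ‖star w * w‖ := CStarRing.norm_star_mul_self.symm
      _ ≤ ‖star w * (x * b * y)‖ := mod_cast hρ
      _ ≤ ‖w‖ * ‖x * b * y‖ := (norm_mul_le _ _).trans_eq (by rw [norm_star])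
  rcases (norm_nonneg w).eq_or_lt with hw0 | hw0
  · exact hw0 ▸ norm_nonneg _
  · exact le_of_mul_le_mul_left hsq hw0

lemma exists_isSelfAdjoint_ne_zero_mul_eq_of_mem_spectrum {c : A} [IsStarNormal c] {s : ℂ}
    (hs : s ∈ spectrum ℂ c) {ε : ℝ} (hε : 0 < ε) :
    ∃ f p : A, IsSelfAdjoint f ∧ f ≠ 0 ∧ c * f = p * f ∧ f * c = f * p ∧
      ‖p - algebraMap ℂ A s‖ ≤ ε := by
  obtain ⟨bump, r, hbump, hr, hs0, hfix, hnorm⟩ := exists_continuous_bump_retraction s hε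
  set f := cfc (fun z ↦ (bump z : ℂ)) c with hf
  have hcf : c * f = cfc r c * f := by
    nth_rw 1 [← cfc_id' ℂ c]
    rw [hf, ← cfc_mul .., ← cfc_mul ..]
    refine cfc_congr fun z _ ↦ ?_
    rcases eq_or_ne (bump z) 0 with hz | hz
    · simp [hz]
    · simp [hfix z hz]
  have hcomm : Commute f c := cfc_id' ℂ c ▸ cfc_commute_cfc _ (fun z ↦ z) c
  refine ⟨f, cfc r c, ?_, ?_, hcf, ?_, ?_⟩
  · rw [IsSelfAdjoint, hf, ← cfc_star]
    simp
  · intro hf0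
    have hle := norm_apply_le_norm_cfc (fun z ↦ (bump z : ℂ)) c hs
    rw [← hf, hf0, norm_zero, norm_le_zero_iff] at hle
    exact hs0 (ofReal_eq_zero.1 hle)
  · rw [hcomm.eq, hcf, (cfc_commute_cfc _ r c).eq]
  · rw [← cfc_const s c, ← cfc_sub ..]
    exact norm_cfc_le hε.le fun z _ ↦ hnorm z

lemma norm_mul_star_sub_star_mul_le_of_mem_spectrum (hA : IsPrimeAlgebra A) {c : A}
    (hc : ∀ z, c * z * star c = star c * z * c) {s t : ℂ} (hs : s ∈ spectrum ℂ c)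
    (ht : t ∈ spectrum ℂ c) {ε : ℝ} (hε : 0 < ε) :
    ‖s * star t - star s * t‖ ≤ 2 * (ε * (‖s‖ + ‖t‖ + ε)) := by
  have : IsStarNormal c := ⟨by simpa [Commute, SemiconjBy] using (hc 1).symm⟩
  obtain ⟨f, p, hf, hf0, hcf, hfc, hp⟩ :=
    exists_isSelfAdjoint_ne_zero_mul_eq_of_mem_spectrum hs hε
  obtain ⟨g, q, hg, hg0, hcg, hgc, hq⟩ :=
    exists_isSelfAdjoint_ne_zero_mul_eq_of_mem_spectrum ht hε
  obtain ⟨z, hz⟩ : ∃ z, f * z * g ≠ 0 := by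
    contrapose! hf0
    exact (isPrimeAlgebra_iff.1 hA f g hf0).resolve_right hg0
  set w := f * z * g with hw
  have hswap : p * w * star q = star p * w * q := by
    have hcf' : star c * f = star p * f := by simpa [hf.star_eq] using congr(star $hfc)
    have hgc' : g * star c = g * star q := by simpa [hg.star_eq] using congr(star $hcg)
    calc p * w * star q = (p * f) * z * (g * star q) := by simp only [hw, mul_assoc]
      _ = c * w * star c := by simp only [← hcf, ← hgc', hw, mul_assoc]
      _ = (star c * f) * z * (g * c) := by rw [hc]; simp only [hw, mul_assoc]
      _ = star p * w * q := by simp only [hcf', hgc, hw, mul_assoc]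
  have hstar {r : A} {u : ℂ} (h : ‖r - algebraMap ℂ A u‖ ≤ ε) :
      ‖star r - algebraMap ℂ A (star u)‖ ≤ ε := by
    rwa [algebraMap_star_comm, ← star_sub, norm_star]
  have hpq := norm_mul_mul_sub_smul_le hp (hstar hq) w
  have hqp := norm_mul_mul_sub_smul_le (hstar hp) hq w
  rw [norm_star] at hpq hqp
  refine le_of_mul_le_mul_right ?_ (norm_pos_iff.2 hz)
  calc ‖s * star t - star s * t‖ * ‖w‖
      = ‖(star p * w * q - (star s * t) • w) - (p * w * star q - (s * star t) • w)‖ := by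
        rw [hswap, sub_sub_sub_cancel_left, ← sub_smul, norm_smul]
    _ ≤ ε * (‖s‖ + ‖t‖ + ε) * ‖w‖ + ε * (‖s‖ + ‖t‖ + ε) * ‖w‖ :=
        (norm_sub_le _ _).trans (add_le_add hqp hpq)
    _ = 2 * (ε * (‖s‖ + ‖t‖ + ε)) * ‖w‖ := by ring

theorem mul_star_eq_star_mul_of_mem_spectrum (hA : IsPrimeAlgebra A) {c : A}
    (hc : ∀ z, c * z * star c = star c * z * c) {s t : ℂ} (hs : s ∈ spectrum ℂ c)
    (ht : t ∈ spectrum ℂ c) : s * star t = star s * t := by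
  have hlim : Filter.Tendsto (fun ε : ℝ ↦ 2 * (ε * (‖s‖ + ‖t‖ + ε))) (nhdsWithin 0 (Set.Ioi 0))
      (nhds 0) := by
    have hcont : Continuous fun ε : ℝ ↦ 2 * (ε * (‖s‖ + ‖t‖ + ε)) := by fun_prop
    simpa using (hcont.tendsto 0).mono_left nhdsWithin_le_nhds
  have hle : ‖s * star t - star s * t‖ ≤ 0 :=
    ge_of_tendsto hlim (eventually_mem_nhdsWithin.mono fun _ ↦
      norm_mul_star_sub_star_mul_le_of_mem_spectrum hA hc hs ht)
  exact sub_eq_zero.1 (norm_le_zero_iff.1 hle)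

theorem exists_eq_smul_isSelfAdjoint (hA : IsPrimeAlgebra A) {c : A}
    (hc : ∀ z, c * z * star c = star c * z * c) :
    ∃ (t : ℂ) (h : A), IsSelfAdjoint h ∧ c = t • h := by
  have : IsStarNormal c := ⟨by simpa [Commute, SemiconjBy] using (hc 1).symm⟩
  by_cases hspec : ∃ t ∈ spectrum ℂ c, t ≠ 0
  · obtain ⟨t, ht, ht0⟩ := hspec
    refine ⟨t, t⁻¹ • c, ?_, (smul_inv_smul₀ ht0 c).symm⟩
    have hcfc : t⁻¹ • c = cfc (fun z : ℂ ↦ t⁻¹ * z) c := (cfc_const_mul_id t⁻¹ c).symm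
    rw [hcfc, IsSelfAdjoint, ← cfc_star]
    refine cfc_congr fun s hs ↦ ?_
    have hst := mul_star_eq_star_mul_of_mem_spectrum hA hc hs ht
    have ht0' : star t ≠ 0 := star_ne_zero.2 ht0
    simp only [star_mul', star_inv₀]
    field_simp
    linear_combination -hst
  · push Not at hspec
    refine ⟨0, 0, .zero A, ?_⟩
    rw [← cfc_id ℂ c, smul_zero, ← cfc_zero ℂ c]
    exact cfc_congr hspec

lemma exists_eq_smul_of_isSelfAdjoint (hA : IsPrimeAlgebra A) {a b : A} (ha : IsSelfAdjoint a)
    (hb : IsSelfAdjoint b) (hb0 : b ≠ 0) (h : ∀ z, a * z * b = b * z * a) :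
    ∃ l : ℂ, a = l • b := by
  have hstar : star (a + I • b) = a - I • b := by
    simp [ha.star_eq, hb.star_eq, sub_eq_add_neg]
  have hswap (z : A) :
      (a + I • b) * z * star (a + I • b) = star (a + I • b) * z * (a + I • b) := by
    simp only [hstar, add_mul, sub_mul, mul_add, mul_sub, smul_mul_assoc, mul_smul_comm, h]
    module
  obtain ⟨t, k, hk, hck⟩ := exists_eq_smul_isSelfAdjoint hA hswap
  have hck' : a - I • b = starRingEnd ℂ t • k := by
    rw [← hstar, hck, star_smul, hk.star_eq, star_def]
  have hre : a = (t.re : ℂ) • k := by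
    rw [re_eq_add_conj]
    linear_combination (norm := module) (1 / 2 : ℂ) • hck + (1 / 2 : ℂ) • hck'
  have him : b = (t.im : ℂ) • k := by
    have hdiff : (2 * I) • b = (t - starRingEnd ℂ t) • k := by
      linear_combination (norm := module) hck - hck'
    rw [im_eq_sub_conj, div_eq_inv_mul, mul_smul, ← hdiff, inv_smul_smul₀ (by simp)]
  have ht : (t.im : ℂ) ≠ 0 := fun ht ↦ hb0 (by rw [him, ht, zero_smul])
  refine ⟨t.re / t.im, ?_⟩
  rw [him, smul_smul, div_mul_cancel₀ _ ht, ← hre]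

open scoped ComplexStarModule in
lemma exists_eq_smul_of_isSelfAdjoint_right (hA : IsPrimeAlgebra A) {a b : A}
    (hb : IsSelfAdjoint b) (hb0 : b ≠ 0) (h : ∀ z, a * z * b = b * z * a) :
    ∃ l : ℂ, a = l • b := by
  have hstar (z : A) : star a * z * b = b * z * star a := by
    simpa [hb.star_eq, mul_assoc] using congr(star $(h (star z))).symm
  obtain ⟨r, hr⟩ := exists_eq_smul_of_isSelfAdjoint hA (ℜ a).2 hb hb0 fun z ↦ by
    simp only [realPart_apply_coe, smul_mul_assoc, mul_smul_comm, add_mul, mul_add, h, hstar]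
  obtain ⟨i, hi⟩ := exists_eq_smul_of_isSelfAdjoint hA (ℑ a).2 hb hb0 fun z ↦ by
    simp only [imaginaryPart_apply_coe, smul_mul_assoc, mul_smul_comm, sub_mul, mul_sub, h, hstar]
  exact ⟨r + I * i, by rw [← realPart_add_I_smul_imaginaryPart a, hr, hi, smul_smul, add_smul]⟩

theorem exists_eq_smul_of_mul_mul_comm (hA : IsPrimeAlgebra A) {a b : A} (hb : b ≠ 0)
    (h : ∀ z, a * z * b = b * z * a) : ∃ l : ℂ, a = l • b := by
  have hb' : star b * b ≠ 0 := (CStarRing.star_mul_self_ne_zero_iff b).2 hb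
  obtain ⟨l, hl⟩ : ∃ l : ℂ, star b * a = l • (star b * b) :=
    exists_eq_smul_of_isSelfAdjoint_right hA (.star_mul_self b) hb' fun z ↦ by
      simpa only [mul_assoc] using congr(star b * $(h (z * star b)))
  have hzero (z : A) : star b * b * z * (a - l • b) = 0 := by
    calc star b * b * z * (a - l • b) = star b * (b * z * a) - l • (star b * b) * z * b := by
          simp only [mul_sub, mul_smul_comm, smul_mul_assoc, mul_assoc]
      _ = 0 := by rw [← h, ← hl]; simp only [mul_assoc, sub_self]
  exact ⟨l, sub_eq_zero.1 <| (isPrimeAlgebra_iff.1 hA _ _ hzero).resolve_left hb'⟩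

theorem exists_eq_smul_of_spectralRadius_mul_le (hA : IsPrimeAlgebra A) {a b : A}
    (h : ∀ x, spectralRadius ℂ (a * x) ≤ spectralRadius ℂ (b * x)) :
    ∃ l : ℂ, ‖l‖ ≤ 1 ∧ a = l • b := by
  have hnorm := norm_mul_mul_le_of_spectralRadius_mul_le h
  have hab : ‖a‖ ≤ ‖b‖ := by simpa using hnorm 1 1
  rcases eq_or_ne b 0 with rfl | hb
  · exact ⟨0, by simp, by simpa using hab⟩
  · obtain ⟨l, rfl⟩ := exists_eq_smul_of_mul_mul_comm hA hb (mul_mul_comm_of_norm_mul_mul_le hnorm)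
    rw [norm_smul] at hab
    exact ⟨l, (mul_le_iff_le_one_left (norm_pos_iff.2 hb)).1 hab, rfl⟩

theorem isPrimeAlgebra_of_exists_eq_smul
    (h : ∀ a b : A, (∀ x, spectralRadius ℂ (a * x) ≤ spectralRadius ℂ (b * x)) →
      ∃ l : ℂ, a = l • b) : IsPrimeAlgebra A := by
  refine isPrimeAlgebra_iff.2 fun x y hxy ↦ ?_
  have hyx := mul_mul_eq_zero_symm hxy
  obtain ⟨l, hl⟩ := h x (x + y) (spectralRadius_mul_le_spectralRadius_add_mul hxy hyx)
  have hly (z : A) : l • (y * z * y) = 0 :=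
    calc l • (y * z * y) = l • (x + y) * z * y := by
          simp only [add_mul, smul_mul_assoc, hxy, zero_add]
      _ = 0 := by rw [← hl, hxy]
  rcases eq_or_ne l 0 with rfl | hl0
  · exact .inl (by rw [hl, zero_smul])
  · exact .inr <| eq_zero_of_forall_mul_mul_self_eq_zero fun z ↦
      (smul_eq_zero_iff_right hl0).1 (hly z)

end CStarAlgebra

theorem cstar_prime_iff_spectralRadius_domination
    {A : Type*} [CStarAlgebra A] :
    IsPrimeAlgebra A ↔
      ∀ a b : A,
        ((∀ x : A, spectralRadius ℂ (a * x) ≤ spectralRadius ℂ (b * x)) ↔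
          ∃ lam : ℂ, ‖lam‖ ≤ 1 ∧ a = lam • b) := by
  refine ⟨fun hA a b ↦ ⟨exists_eq_smul_of_spectralRadius_mul_le hA, ?_⟩, fun h ↦
    isPrimeAlgebra_of_exists_eq_smul fun a b hab ↦ ((h a b).1 hab).imp fun _ ↦ And.right⟩
  rintro ⟨l, hl, rfl⟩ x
  calc spectralRadius ℂ (l • b * x) = spectralRadius ℂ (l • (b * x)) := by rw [smul_mul_assoc]
    _ ≤ ‖l‖₊ * spectralRadius ℂ (b * x) := spectralRadius_smul_le l (b * x)
    _ ≤ spectralRadius ℂ (b * x) := mul_le_of_le_one_left' (mod_cast hl)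
end
end
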